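/- Let ξ_d < 0 be the unique negative eigenvalue of 𝓛 with L²-normalized eigenfunction φ_d, and let φ(·,η) be the generalized eigenfunction of 𝓛 with eigenvalue η > 0 normalized by φ(0,η)=0, ∂_Rφ(0,η)=1. Then the function K_d(η) := ∫₀^∞ R φ_d'(R) φ(R,η) dR is well defined (the integral converges), smooth on (0,∞), and rapidly decaying at infinity: for every N there is C_N with |K_d(η)| ≤ C_N η^{−N} for η ≥ 1. -/

import Mathlib

open MeasureTheory

noncomputable section

namespace DiscreteKernel

/-!
Write `L = -∂² - q` and `u(R) = R φ_d'(R)`. Since `L φ(·,η) = η φ(·,η)`, integrating by parts `N`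
times turns `η ^ N K_d(η)` into `∫ (L ^ N u) φ(·,η)`: every `L ^ j u` has the form `P φ_d + S φ_d'`
with `P` even and `S` odd, so it vanishes at `0` together with `φ(·,η)` and no boundary term
appears, while exponential decay of `φ_d` and `φ_d'` removes the contributions at infinity. The
energy `φ'² + η φ²` bounds `φ(·,η)` uniformly in `η ≥ 1`, which gives the decay.

For smoothness, Duhamel's formula at the fixed frequency `√η₀` turns the equation for `φ(·,η)` into
a Volterra equation that is affine in `η`. In a suitable exponential weight its operator at `η₀` is
a small perturbation of the identity, so `φ(·,η)` and with it `K_d` are analytic near `η₀` because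
inversion is analytic on units.
-/

section

open Set Filter Asymptotics Real
open scoped Topology NNReal BoundedContinuousFunction

/-! ### Differential inequalities -/

theorem monotoneOn_exp_mul_of_nonneg_deriv_add {B B' v v' : ℝ → ℝ} {R₀ : ℝ}
    (hB : ∀ R, HasDerivAt B (B' R) R) (hv : ∀ R, HasDerivAt v (v' R) R)
    (h : ∀ R ∈ Ioi R₀, 0 ≤ v' R + B' R * v R) :
    MonotoneOn (fun R => exp (B R) * v R) (Ici R₀) := by
  have hd : ∀ R, HasDerivAt (fun R => exp (B R) * v R)
      (exp (B R) * (v' R + B' R * v R)) R := fun R =>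
    ((hB R).exp.mul (hv R)).congr_deriv (by ring)
  refine monotoneOn_of_hasDerivWithinAt_nonneg (convex_Ici _)
    (HasDerivAt.continuousOn fun R _ => hd R) (fun R _ => (hd R).hasDerivWithinAt) fun R hR => ?_
  rw [interior_Ici] at hR
  exact mul_nonneg (exp_pos _).le (h R hR)

theorem le_mul_exp_integral_of_deriv_le {E E' g : ℝ → ℝ} {a R : ℝ} (hg : Continuous g)
    (hE : ∀ R, HasDerivAt E (E' R) R) (h : ∀ R ∈ Ioi a, E' R ≤ g R * E R) (hR : a ≤ R) :
    E R ≤ E a * exp (∫ s in a..R, g s) := by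
  have hmono := monotoneOn_exp_mul_of_nonneg_deriv_add (R₀ := a)
    (fun R => (hg.integral_hasStrictDerivAt a R).hasDerivAt.neg) (fun R => (hE R).neg)
    (fun R hR => by simpa [neg_mul_neg, add_comm] using h R hR) self_mem_Ici hR hR
  simp only [Pi.neg_apply, intervalIntegral.integral_same, neg_zero, exp_zero, one_mul, mul_neg,
    neg_le_neg_iff, exp_neg] at hmono
  rwa [inv_mul_le_iff₀ (exp_pos _), mul_comm] at hmono

theorem not_integrableOn_Ioi_of_eventually_le {v : ℝ → ℝ} {a c : ℝ} (hc : 0 < c)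
    (hv : ∀ᶠ R in atTop, c ≤ v R) : ¬ IntegrableOn v (Ioi a) := by
  intro hint
  obtain ⟨R, hR⟩ := eventually_atTop.1 hv
  have hconst : IntegrableOn (fun _ : ℝ => c) (Ioi (max a R)) :=
    (hint.mono_set (Ioi_subset_Ioi (le_max_left a R))).mono' aestronglyMeasurable_const <|
      (ae_restrict_mem measurableSet_Ioi).mono fun x hx => by
        rw [norm_of_nonneg hc.le]
        exact hR x ((le_max_right a R).trans hx.le)
  simp [integrableOn_const_iff, hc.ne'] at hconst

theorem eventually_le_of_le_deriv_add_mul {v v' : ℝ → ℝ} {b c R₀ : ℝ} (hb : 0 < b) (hc : 0 < c)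
    (hv : ∀ R, HasDerivAt v (v' R) R) (hv_nonneg : ∀ R, 0 ≤ v R)
    (h : ∀ R ∈ Ioi R₀, c ≤ v' R + b * v R) : ∀ᶠ R in atTop, c / (2 * b) ≤ v R := by
  have hmono := monotoneOn_exp_mul_of_nonneg_deriv_add (R₀ := R₀)
    (fun R => (hasDerivAt_id R).const_mul b) (fun R => (hv R).sub_const (c / b)) fun R hR => by
      have := h R hR
      have : b * (c / b) = c := mul_div_cancel₀ c hb.ne'
      linarith
  have htail : Tendsto (fun R => exp (b * (R₀ - R))) atTop (𝓝 0) :=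
    tendsto_exp_atBot.comp <| by
      simpa only [sub_eq_add_neg] using
        (tendsto_atBot_add_const_left atTop R₀ tendsto_neg_atTop_atBot).const_mul_atBot hb
  filter_upwards [eventually_ge_atTop R₀, htail.eventually_le_const one_half_pos] with R hR hexp
  have hsplit : exp (b * R) * exp (b * (R₀ - R)) = exp (b * R₀) := by
    rw [← exp_add]
    ring_nf
  have hlower : c / b * (1 - exp (b * (R₀ - R))) ≤ v R := by
    refine le_of_mul_le_mul_left ?_ (exp_pos (b * R))
    have := hmono self_mem_Ici hR hR
    simp only [id_eq] at this
    linear_combination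
      this - c / b * hsplit + mul_nonneg (exp_pos (b * R₀)).le (hv_nonneg R₀)
  calc c / (2 * b) = c / b * (1 - 1 / 2) := by field_simp; norm_num
    _ ≤ c / b * (1 - exp (b * (R₀ - R))) := by gcongr
    _ ≤ v R := hlower

theorem deriv_add_mul_nonpos_of_integrableOn {v v' v'' : ℝ → ℝ} {a b R₀ R : ℝ} (hb : 0 < b)
    (hv : ∀ R, HasDerivAt v (v' R) R) (hv' : ∀ R, HasDerivAt v' (v'' R) R)
    (hv_nonneg : ∀ R, 0 ≤ v R) (h : ∀ R ∈ Ioi R₀, b ^ 2 * v R ≤ v'' R)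
    (hint : IntegrableOn v (Ioi a)) (hR : R₀ ≤ R) : v' R + b * v R ≤ 0 := by
  -- `exp (-b R) (v' + b v)` increases, so positivity at one point keeps `v` away from `0`.
  by_contra! hc
  refine not_integrableOn_Ioi_of_eventually_le (by positivity)
    (eventually_le_of_le_deriv_add_mul (R₀ := R) hb hc hv hv_nonneg fun x hx => ?_) hint
  have hmono := monotoneOn_exp_mul_of_nonneg_deriv_add (R₀ := R₀)
    (fun x => ((hasDerivAt_id x).const_mul b).neg) (fun x => (hv' x).add ((hv x).const_mul b))
    (fun x hx => by
      have := h x hx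
      simp only [Pi.add_apply]
      linarith) hR (hR.trans (le_of_lt hx)) (le_of_lt hx)
  have hexp : exp (-(b * x)) ≤ exp (-(b * R)) := by
    have := mul_le_mul_of_nonneg_left (mem_Ioi.1 hx).le hb.le
    gcongr
  simp only [Pi.neg_apply, id_eq, Pi.add_apply] at hmono
  exact le_of_mul_le_mul_left ((mul_le_mul_of_nonneg_right hexp hc.le).trans hmono) (exp_pos _)

theorem isBigO_exp_neg_of_sq_mul_le_deriv_deriv {v v' v'' : ℝ → ℝ} {a b : ℝ} (hb : 0 < b)
    (hv : ∀ R, HasDerivAt v (v' R) R) (hv' : ∀ R, HasDerivAt v' (v'' R) R)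
    (hv_nonneg : ∀ R, 0 ≤ v R) (h : ∀ᶠ R in atTop, b ^ 2 * v R ≤ v'' R)
    (hint : IntegrableOn v (Ioi a)) : v =O[atTop] fun R => exp (-b * R) := by
  obtain ⟨R₀, hR₀⟩ := eventually_atTop.1 h
  have hmono := monotoneOn_exp_mul_of_nonneg_deriv_add (R₀ := R₀)
      (fun x => (hasDerivAt_id x).const_mul b) (fun x => (hv x).neg) fun R hR => by
    have := deriv_add_mul_nonpos_of_integrableOn hb hv hv' hv_nonneg
      (fun x hx => hR₀ x (le_of_lt hx)) hint (le_of_lt hR)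
    simp only [Pi.neg_apply]
    linarith
  refine IsBigO.of_bound (exp (b * R₀) * v R₀) ?_
  filter_upwards [eventually_ge_atTop R₀] with R hR
  have := hmono self_mem_Ici hR hR
  simp only [Pi.neg_apply, id_eq, mul_neg, neg_le_neg_iff] at this
  rw [norm_of_nonneg (hv_nonneg R), norm_of_nonneg (exp_pos _).le, neg_mul, exp_neg,
    ← div_eq_mul_inv, le_div_iff₀ (exp_pos _)]
  linarith

theorem abs_deriv_le_of_abs_le {f f' f'' : ℝ → ℝ} {R A B : ℝ}
    (hf : ∀ x, HasDerivAt f (f' x) x) (hf' : ∀ x, HasDerivAt f' (f'' x) x)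
    (hA : ∀ x ∈ Icc R (R + 1), |f x| ≤ A) (hB : ∀ x ∈ Ioo R (R + 1), |f'' x| ≤ B) :
    |f' R| ≤ 2 * A + B := by
  obtain ⟨x, hx, hslope⟩ := exists_hasDerivAt_eq_slope f f' (lt_add_one R)
    (HasDerivAt.continuousOn fun x _ => hf x) fun x _ => hf x
  obtain ⟨y, hy, hslope'⟩ := exists_hasDerivAt_eq_slope f' f'' hx.1
    (HasDerivAt.continuousOn fun x _ => hf' x) fun x _ => hf' x
  rw [add_sub_cancel_left, div_one] at hslope
  rw [eq_div_iff (sub_pos.2 hx.1).ne'] at hslope'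
  have hstep : |f'' y * (x - R)| ≤ B := by
    rw [abs_mul, abs_of_pos (sub_pos.2 hx.1)]
    have := hB y ⟨hy.1, hy.2.trans hx.2⟩
    nlinarith [abs_nonneg (f'' y), hx.1, hx.2]
  have h₀ := hA R (by simp)
  have h₁ := hA (R + 1) (by simp)
  rw [abs_le] at *
  constructor <;> linarith

theorem isBigO_exp_neg_deriv {f f' f'' : ℝ → ℝ} {b : ℝ} (hb : 0 ≤ b)
    (hf : ∀ x, HasDerivAt f (f' x) x) (hf' : ∀ x, HasDerivAt f' (f'' x) x)
    (hfO : f =O[atTop] fun R => exp (-b * R)) (hfO'' : f'' =O[atTop] fun R => exp (-b * R)) :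
    f' =O[atTop] fun R => exp (-b * R) := by
  obtain ⟨A, hA, hfA⟩ := hfO.exists_nonneg
  obtain ⟨B, hB, hfB⟩ := hfO''.exists_nonneg
  obtain ⟨R₀, hR₀⟩ := eventually_atTop.1 (hfA.bound.and hfB.bound)
  have hanti : ∀ {R x : ℝ}, R ≤ x → ‖exp (-b * x)‖ ≤ ‖exp (-b * R)‖ := fun hx => by
    rw [norm_of_nonneg (exp_pos _).le, norm_of_nonneg (exp_pos _).le]
    exact exp_le_exp.2 (mul_le_mul_of_nonpos_left hx (neg_nonpos.2 hb))
  refine IsBigO.of_bound (2 * A + B) ?_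
  filter_upwards [eventually_ge_atTop R₀] with R hR
  rw [norm_eq_abs, add_mul, mul_assoc]
  refine abs_deriv_le_of_abs_le hf hf' (fun x hx => ?_) fun x hx => ?_
  · exact (hR₀ x (hR.trans hx.1)).1.trans (mul_le_mul_of_nonneg_left (hanti hx.1) hA)
  · exact (hR₀ x (hR.trans hx.1.le)).2.trans (mul_le_mul_of_nonneg_left (hanti hx.1.le) hB)

theorem intervalIntegral_abs_le_integral_Ioi {q : ℝ → ℝ} {a R : ℝ} (hq : IntegrableOn q (Ioi a))
    (hR : a ≤ R) : ∫ s in a..R, |q s| ≤ ∫ s in Ioi a, |q s| := by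
  rw [intervalIntegral.integral_of_le hR]
  exact setIntegral_mono_set hq.abs (ae_of_all _ fun s => abs_nonneg (q s))
    Ioc_subset_Ioi_self.eventuallyLE

/-! ### Solutions of the Schrödinger equation -/

/-- `f` is twice differentiable and solves `-f'' - q f = lam f` on the open half-line, where the
potential enters with the sign of `𝓛`. -/
structure IsSchrodingerSolution (q : ℝ → ℝ) (lam : ℝ) (f : ℝ → ℝ) : Prop where
  differentiable : Differentiable ℝ f
  differentiable_deriv : Differentiable ℝ (deriv f)
  eq_on_Ioi : ∀ R ∈ Ioi (0 : ℝ), -deriv (deriv f) R - q R * f R = lam * f R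

namespace IsSchrodingerSolution

variable {q f : ℝ → ℝ} {lam : ℝ}

theorem hasDerivAt (hf : IsSchrodingerSolution q lam f) (R : ℝ) : HasDerivAt f (deriv f R) R :=
  (hf.differentiable R).hasDerivAt

theorem hasDerivAt_deriv (hf : IsSchrodingerSolution q lam f) (R : ℝ) :
    HasDerivAt (deriv f) (deriv (deriv f) R) R :=
  (hf.differentiable_deriv R).hasDerivAt

theorem deriv_deriv (hf : IsSchrodingerSolution q lam f) {R : ℝ} (hR : 0 < R) :
    deriv (deriv f) R = -(q R + lam) * f R := by
  linear_combination -hf.eq_on_Ioi R hR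

theorem isBigO_exp_neg (hf : IsSchrodingerSolution q lam f) (hlam : lam < 0)
    (hq : Tendsto q atTop (𝓝 0)) (hf_int : IntegrableOn (fun R => f R ^ 2) (Ioi 0)) :
    f =O[atTop] fun R => exp (-(√(-lam) / 2) * R) := by
  have hb : 0 < √(-lam) := sqrt_pos.2 (neg_pos.2 hlam)
  have hsq : (fun R => f R ^ 2) =O[atTop] fun R => exp (-√(-lam) * R) := by
    refine isBigO_exp_neg_of_sq_mul_le_deriv_deriv hb
      (fun R => ((hf.hasDerivAt R).pow 2).congr_deriv (by simp [mul_assoc]))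
      (fun R => ((hf.hasDerivAt R).mul (hf.hasDerivAt_deriv R)).const_mul 2)
      (fun R => sq_nonneg _) ?_ hf_int
    filter_upwards [hq.eventually_le_const (show 0 < -lam / 2 by linarith), eventually_gt_atTop 0]
      with R hqR hR
    rw [hf.deriv_deriv hR, sq_sqrt (neg_pos.2 hlam).le]
    nlinarith [sq_nonneg (deriv f R), mul_le_mul_of_nonneg_right hqR (sq_nonneg (f R))]
  refine IsBigO.of_pow two_ne_zero (hsq.congr_right fun R => ?_)
  rw [Pi.pow_apply, ← exp_nat_mul]
  ring_nf

theorem isBigO_exp_neg_deriv (hf : IsSchrodingerSolution q lam f) (hlam : lam < 0)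
    (hq : Tendsto q atTop (𝓝 0)) (hf_int : IntegrableOn (fun R => f R ^ 2) (Ioi 0)) :
    deriv f =O[atTop] fun R => exp (-(√(-lam) / 2) * R) := by
  have hf_O := hf.isBigO_exp_neg hlam hq hf_int
  have hpot : (fun R => -(q R + lam)) =O[atTop] fun _ => (1 : ℝ) :=
    (hq.add_const lam).neg.isBigO_one ℝ
  refine DiscreteKernel.isBigO_exp_neg_deriv (by positivity) hf.hasDerivAt hf.hasDerivAt_deriv
    hf_O ((hpot.mul hf_O).congr' ?_ (.of_eq (funext fun R => one_mul _)))
  filter_upwards [eventually_gt_atTop 0] with R hR using (hf.deriv_deriv hR).symm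

theorem energy_le (hf : IsSchrodingerSolution q lam f) (hq : Continuous q) (hlam : 0 < lam)
    {R : ℝ} (hR : 0 ≤ R) :
    deriv f R ^ 2 + lam * f R ^ 2 ≤
      (deriv f 0 ^ 2 + lam * f 0 ^ 2) * exp (∫ s in (0 : ℝ)..R, |q s| / √lam) := by
  refine le_mul_exp_integral_of_deriv_le (g := fun s => |q s| / √lam) (by fun_prop)
    (fun R => ((hf.hasDerivAt_deriv R).pow 2).add (((hf.hasDerivAt R).pow 2).const_mul lam))
    (fun R hR => ?_) hR
  have hyoung : √lam * (2 * |deriv f R * f R|) ≤ deriv f R ^ 2 + lam * f R ^ 2 := by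
    have := two_mul_le_add_sq |deriv f R| (√lam * |f R|)
    rw [mul_pow, sq_abs, sq_abs, sq_sqrt hlam.le] at this
    rw [abs_mul]
    linarith
  calc _ = -q R * (2 * (deriv f R * f R)) := by
        rw [hf.deriv_deriv hR]
        ring
    _ ≤ |q R| * (2 * |deriv f R * f R|) := by
        rw [← abs_two, ← abs_mul, ← abs_neg (q R), ← abs_mul, abs_two]
        exact le_abs_self _
    _ = |q R| / √lam * (√lam * (2 * |deriv f R * f R|)) := by field_simp
    _ ≤ _ := mul_le_mul_of_nonneg_left hyoung (by positivity)

end IsSchrodingerSolution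

/-- The solution of `-f'' - q f = lam f` with Cauchy data `f 0 = 0`, `f' 0 = 1`. -/
structure IsRegularSolution (q : ℝ → ℝ) (lam : ℝ) (f : ℝ → ℝ) : Prop
    extends IsSchrodingerSolution q lam f where
  map_zero : f 0 = 0
  deriv_zero : deriv f 0 = 1

namespace IsRegularSolution

variable {q f : ℝ → ℝ} {lam : ℝ}

theorem energy_le_exp (hf : IsRegularSolution q lam f) (hq : Continuous q)
    (hq_int : IntegrableOn q (Ioi 0)) (hlam : 0 < lam) {R : ℝ} (hR : 0 ≤ R) :
    deriv f R ^ 2 + lam * f R ^ 2 ≤ exp ((∫ s in Ioi 0, |q s|) / √lam) := by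
  have henergy := hf.energy_le hq hlam hR
  rw [hf.map_zero, hf.deriv_zero, intervalIntegral.integral_div] at henergy
  calc _ ≤ _ := henergy
    _ = exp ((∫ s in (0 : ℝ)..R, |q s|) / √lam) := by ring
    _ ≤ _ := by
      gcongr
      exact intervalIntegral_abs_le_integral_Ioi hq_int hR

theorem abs_le (hf : IsRegularSolution q lam f) (hq : Continuous q)
    (hq_int : IntegrableOn q (Ioi 0)) (hlam : 0 < lam) {R : ℝ} (hR : 0 ≤ R) :
    |f R| ≤ √(exp ((∫ s in Ioi 0, |q s|) / √lam) / lam) :=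
  abs_le_sqrt <| (le_div_iff₀ hlam).2 <| by
    linarith [hf.energy_le_exp hq hq_int hlam hR, sq_nonneg (deriv f R)]

theorem energy_le_exp_of_one_le (hf : IsRegularSolution q lam f) (hq : Continuous q)
    (hq_int : IntegrableOn q (Ioi 0)) (hlam : 1 ≤ lam) {R : ℝ} (hR : 0 ≤ R) :
    deriv f R ^ 2 + lam * f R ^ 2 ≤ exp (∫ s in Ioi 0, |q s|) :=
  (hf.energy_le_exp hq hq_int (one_pos.trans_le hlam) hR).trans <| exp_le_exp.2 <|
    div_le_self (integral_nonneg fun s => abs_nonneg (q s)) (one_le_sqrt.2 hlam)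

theorem abs_le_of_one_le (hf : IsRegularSolution q lam f) (hq : Continuous q)
    (hq_int : IntegrableOn q (Ioi 0)) (hlam : 1 ≤ lam) {R : ℝ} (hR : 0 ≤ R) :
    |f R| ≤ √(exp (∫ s in Ioi 0, |q s|)) :=
  abs_le_sqrt <| by
    nlinarith [hf.energy_le_exp_of_one_le hq hq_int hlam hR, sq_nonneg (deriv f R), sq_nonneg (f R)]

theorem abs_deriv_le_of_one_le (hf : IsRegularSolution q lam f) (hq : Continuous q)
    (hq_int : IntegrableOn q (Ioi 0)) (hlam : 1 ≤ lam) {R : ℝ} (hR : 0 ≤ R) :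
    |deriv f R| ≤ √(exp (∫ s in Ioi 0, |q s|)) :=
  abs_le_sqrt <| by
    nlinarith [hf.energy_le_exp_of_one_le hq hq_int hlam hR, sq_nonneg (f R)]

end IsRegularSolution

/-! ### Combinations of a solution and its derivative -/

theorem hasTemperateGrowth_deriv {f : ℝ → ℝ} (hf : f.HasTemperateGrowth) :
    (deriv f).HasTemperateGrowth := by
  refine ⟨(contDiff_infty_iff_deriv.1 hf.1).2, fun n => ?_⟩
  obtain ⟨k, C, hC⟩ := hf.2 (n + 1)
  refine ⟨k, C, fun x => ?_⟩
  simpa only [norm_iteratedFDeriv_eq_norm_iteratedDeriv, iteratedDeriv_succ'] using hC x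

theorem odd_deriv_of_even {f : ℝ → ℝ} (hf : f.Even) : (deriv f).Odd := fun x => by
  rw [← neg_eq_iff_eq_neg, ← deriv_comp_neg, funext hf]

theorem even_deriv_of_odd {f : ℝ → ℝ} (hf : f.Odd) : (deriv f).Even := fun x => by
  rw [← neg_inj, ← deriv_comp_neg, funext hf]
  exact deriv.neg

theorem isBigO_exp_of_hasTemperateGrowth {f : ℝ → ℝ} (hf : f.HasTemperateGrowth) {b : ℝ}
    (hb : 0 < b) : f =O[atTop] fun R => exp (b * R) := by
  obtain ⟨k, C, hC⟩ := hf.2 0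
  have hpoly : f =O[atTop] fun R => (1 + ‖R‖) ^ k := by
    refine IsBigO.of_bound C (Eventually.of_forall fun R => ?_)
    rw [norm_of_nonneg (by positivity : 0 ≤ (1 + ‖R‖) ^ k)]
    simpa using hC R
  have hlin : (fun R : ℝ => 1 + ‖R‖) =O[atTop] fun R => R ^ 1 := by
    refine IsBigO.of_bound 2 ?_
    filter_upwards [eventually_ge_atTop 1] with R hR
    rw [pow_one, norm_of_nonneg (by positivity : 0 ≤ 1 + ‖R‖), norm_of_nonneg (by linarith)]
    linarith
  refine hpoly.trans (((hlin.pow k).congr_right fun R => ?_).trans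
    (isLittleO_pow_exp_pos_mul_atTop k hb).isBigO)
  rw [pow_one]

theorem isBigO_exp_neg_mul_of_hasTemperateGrowth {f g : ℝ → ℝ} {a b : ℝ}
    (hf : f.HasTemperateGrowth) (hg : g =O[atTop] fun R => exp (-a * R)) (hba : b < a) :
    (fun R => f R * g R) =O[atTop] fun R => exp (-b * R) := by
  refine ((isBigO_exp_of_hasTemperateGrowth hf (sub_pos.2 hba)).mul hg).congr_right fun R => ?_
  rw [← exp_add]
  ring_nf

/-- Pairs `(P, S)` of coefficients of `P f + S f'` with `P` even and `S` odd, both smooth of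
temperate growth. Oddness of `S` makes `P f + S f'` vanish at the origin when `f` does. -/
structure IsEvenOddPair (c : (ℝ → ℝ) × (ℝ → ℝ)) : Prop where
  even : c.1.Even
  odd : c.2.Odd
  temperate_fst : c.1.HasTemperateGrowth
  temperate_snd : c.2.HasTemperateGrowth

/-- The function `P f + S f'` with coefficient pair `c = (P, S)`. -/
def jetCombination (c : (ℝ → ℝ) × (ℝ → ℝ)) (f : ℝ → ℝ) (R : ℝ) : ℝ :=
  c.1 R * f R + c.2 R * deriv f R

theorem jetCombination_zero_id (f : ℝ → ℝ) (R : ℝ) :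
    jetCombination (0, id) f R = R * deriv f R := by
  simp only [jetCombination, Pi.zero_apply, zero_mul, id_eq, zero_add]

/-- The coefficient pair of the derivative of `P f + S f'`, where `f'' = -(q + lam) f`. -/
def derivPair (q : ℝ → ℝ) (lam : ℝ) (c : (ℝ → ℝ) × (ℝ → ℝ)) : (ℝ → ℝ) × (ℝ → ℝ) :=
  (deriv c.1 - (fun R => q R + lam) * c.2, c.1 + deriv c.2)

/-- The coefficient pair of `-u'' - q u`, where `u = P f + S f'` and `f'' = -(q + lam) f`. -/
def schrodingerPair (q : ℝ → ℝ) (lam : ℝ) (c : (ℝ → ℝ) × (ℝ → ℝ)) : (ℝ → ℝ) × (ℝ → ℝ) :=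
  (-(derivPair q lam (derivPair q lam c)).1 - q * c.1,
    -(derivPair q lam (derivPair q lam c)).2 - q * c.2)

theorem jetCombination_schrodingerPair (q : ℝ → ℝ) (lam : ℝ) (c : (ℝ → ℝ) × (ℝ → ℝ)) (f : ℝ → ℝ)
    (R : ℝ) : jetCombination (schrodingerPair q lam c) f R =
      -jetCombination (derivPair q lam (derivPair q lam c)) f R - q R * jetCombination c f R := by
  simp only [jetCombination, schrodingerPair, Pi.sub_apply, Pi.neg_apply, Pi.mul_apply]
  ring

namespace IsEvenOddPair

variable {q f : ℝ → ℝ} {c : (ℝ → ℝ) × (ℝ → ℝ)}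

theorem zero_id : IsEvenOddPair (0, id) where
  even := .zero
  odd _ := rfl
  temperate_fst := .zero
  temperate_snd := .id

theorem swap_derivPair (hq_even : q.Even) (hq : q.HasTemperateGrowth) (lam : ℝ)
    (hc : IsEvenOddPair c) : IsEvenOddPair (derivPair q lam c).swap where
  even := hc.even.add (even_deriv_of_odd hc.odd)
  odd R := by
    simp only [derivPair, Prod.swap_prod_mk, Pi.sub_apply, Pi.mul_apply,
      (odd_deriv_of_even hc.even).eq, hq_even.eq, hc.odd.eq]
    ring
  temperate_fst := hc.temperate_fst.add (hasTemperateGrowth_deriv hc.temperate_snd)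
  temperate_snd := (hasTemperateGrowth_deriv hc.temperate_fst).sub
    ((hq.add (.const lam)).mul hc.temperate_snd)

theorem derivPair_of_swap (hq_even : q.Even) (hq : q.HasTemperateGrowth) (lam : ℝ)
    (hc : IsEvenOddPair c.swap) : IsEvenOddPair (derivPair q lam c) where
  even R := by
    have hfst : (deriv c.1).Even := even_deriv_of_odd hc.odd
    have hsnd : c.2.Even := hc.even
    simp only [derivPair, Pi.sub_apply, Pi.mul_apply, hfst.eq, hsnd.eq, hq_even.eq]
  odd := hc.odd.add (odd_deriv_of_even hc.even)
  temperate_fst := (hasTemperateGrowth_deriv hc.temperate_snd).sub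
    ((hq.add (.const lam)).mul hc.temperate_fst)
  temperate_snd := hc.temperate_snd.add (hasTemperateGrowth_deriv hc.temperate_fst)

theorem schrodingerPair (hq_even : q.Even) (hq : q.HasTemperateGrowth) (lam : ℝ)
    (hc : IsEvenOddPair c) : IsEvenOddPair (schrodingerPair q lam c) := by
  have hd := (hc.swap_derivPair hq_even hq lam).derivPair_of_swap hq_even hq lam
  exact
    { even := fun R => by
        simp only [DiscreteKernel.schrodingerPair, Pi.sub_apply, Pi.neg_apply, Pi.mul_apply,
          hd.even.eq, hq_even.eq, hc.even.eq]
      odd := fun R => by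
        simp only [DiscreteKernel.schrodingerPair, Pi.sub_apply, Pi.neg_apply, Pi.mul_apply,
          hd.odd.eq, hq_even.eq, hc.odd.eq]
        ring
      temperate_fst := hd.temperate_fst.neg.sub (hq.mul hc.temperate_fst)
      temperate_snd := hd.temperate_snd.neg.sub (hq.mul hc.temperate_snd) }

theorem iterate_schrodingerPair (hq_even : q.Even) (hq : q.HasTemperateGrowth) (lam : ℝ)
    (hc : IsEvenOddPair c) (N : ℕ) : IsEvenOddPair ((DiscreteKernel.schrodingerPair q lam)^[N] c) :=
  Function.Iterate.rec IsEvenOddPair hc (fun _ h => h.schrodingerPair hq_even hq lam) N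

theorem jetCombination_zero (hc : IsEvenOddPair c) (hf : f 0 = 0) : jetCombination c f 0 = 0 := by
  simp [jetCombination, hf, hc.odd.map_zero]

end IsEvenOddPair

/-! ### Decay in the energy -/

theorem integrableOn_mul_of_abs_le {u f : ℝ → ℝ} {M : ℝ} (hu : IntegrableOn u (Ioi 0))
    (hf : Continuous f) (hM : ∀ R, 0 ≤ R → |f R| ≤ M) :
    IntegrableOn (fun R => u R * f R) (Ioi 0) :=
  hu.mul_bdd hf.aestronglyMeasurable <|
    (ae_restrict_mem measurableSet_Ioi).mono fun R hR => hM R (le_of_lt hR)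

theorem abs_integral_mul_le {u f : ℝ → ℝ} {M : ℝ} (hu : IntegrableOn u (Ioi 0))
    (hM : ∀ R, 0 ≤ R → |f R| ≤ M) :
    |∫ R in Ioi 0, u R * f R| ≤ M * ∫ R in Ioi 0, |u R| := by
  rw [← integral_const_mul, ← norm_eq_abs]
  refine norm_integral_le_of_norm_le (hu.abs.const_mul M) <|
    (ae_restrict_mem measurableSet_Ioi).mono fun R hR => ?_
  rw [norm_mul, norm_eq_abs, norm_eq_abs, mul_comm]
  exact mul_le_mul_of_nonneg_right (hM R (le_of_lt hR)) (abs_nonneg _)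

theorem tendsto_zero_of_isBigO_exp_neg {f : ℝ → ℝ} {b : ℝ} (hb : 0 < b)
    (hf : f =O[atTop] fun R => exp (-b * R)) : Tendsto f atTop (𝓝 0) :=
  hf.trans_tendsto <| tendsto_exp_atBot.comp <|
    tendsto_id.const_mul_atTop_of_neg (neg_lt_zero.2 hb)

namespace IsSchrodingerSolution

variable {q f : ℝ → ℝ} {lam : ℝ} {c : (ℝ → ℝ) × (ℝ → ℝ)}

theorem mul_integral_mul_eq (hf : IsSchrodingerSolution q lam f) (hf_zero : f 0 = 0) {M : ℝ}
    (hM : ∀ R, 0 ≤ R → |f R| ≤ M) (hM' : ∀ R, 0 ≤ R → |deriv f R| ≤ M) {u u' w : ℝ → ℝ}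
    (hu : ContinuousWithinAt u (Ici 0) 0) (hu' : ContinuousWithinAt u' (Ici 0) 0)
    (hu_deriv : ∀ R, 0 < R → HasDerivAt u (u' R) R)
    (hu'_deriv : ∀ R, 0 < R → HasDerivAt u' (-w R - q R * u R) R) (hu_zero : u 0 = 0)
    (hu_int : IntegrableOn u (Ioi 0)) (hw_int : IntegrableOn w (Ioi 0))
    (hu_lim : Tendsto u atTop (𝓝 0)) (hu'_lim : Tendsto u' atTop (𝓝 0)) :
    lam * ∫ R in Ioi 0, u R * f R = ∫ R in Ioi 0, w R * f R := by
  have hbdd : ∀ {g : ℝ → ℝ}, (∀ R, 0 ≤ R → |g R| ≤ M) →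
      IsBoundedUnder (· ≤ ·) atTop ((‖·‖) ∘ g) := fun hg =>
    isBoundedUnder_of_eventually_le ((eventually_ge_atTop 0).mono hg)
  have huf := (integrableOn_mul_of_abs_le hu_int hf.differentiable.continuous hM).const_mul lam
  have hwf := integrableOn_mul_of_abs_le hw_int hf.differentiable.continuous hM
  have hlim : Tendsto (fun R => u R * deriv f R - u' R * f R) atTop (𝓝 0) := by
    simpa only [sub_zero] using (hu_lim.zero_mul_isBoundedUnder_le (hbdd hM')).sub
      (hu'_lim.zero_mul_isBoundedUnder_le (hbdd hM))
  have hgreen := integral_Ioi_of_hasDerivAt_of_tendsto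
    (f' := fun R => w R * f R - lam * (u R * f R))
    ((hu.mul hf.differentiable_deriv.continuous.continuousWithinAt).sub
      (hu'.mul hf.differentiable.continuous.continuousWithinAt))
    (fun R hR => (((hu_deriv R hR).mul (hf.hasDerivAt_deriv R)).sub
      ((hu'_deriv R hR).mul (hf.hasDerivAt R))).congr_deriv (by
        rw [hf.deriv_deriv hR]
        ring))
    (hwf.sub huf)
    hlim
  rw [integral_sub hwf huf, integral_const_mul] at hgreen
  simp only [Pi.sub_apply, Pi.mul_apply, hu_zero, hf_zero] at hgreen
  linarith

theorem hasDerivAt_jetCombination (hf : IsSchrodingerSolution q lam f)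
    (hc₁ : Differentiable ℝ c.1) (hc₂ : Differentiable ℝ c.2) {R : ℝ} (hR : 0 < R) :
    HasDerivAt (jetCombination c f) (jetCombination (derivPair q lam c) f R) R := by
  refine (((hc₁ R).hasDerivAt.mul (hf.hasDerivAt R)).add
    ((hc₂ R).hasDerivAt.mul (hf.hasDerivAt_deriv R))).congr_deriv ?_
  simp only [hf.deriv_deriv hR, jetCombination, derivPair, Pi.sub_apply, Pi.mul_apply,
    Pi.add_apply]
  ring

theorem continuous_jetCombination (hf : IsSchrodingerSolution q lam f) (hc₁ : Continuous c.1)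
    (hc₂ : Continuous c.2) : Continuous (jetCombination c f) :=
  (hc₁.mul hf.differentiable.continuous).add (hc₂.mul hf.differentiable_deriv.continuous)

end IsSchrodingerSolution

/-- A square-integrable solution with Dirichlet condition at the origin; unlike an eigenfunction
it is allowed to vanish identically. -/
structure IsBoundState (q : ℝ → ℝ) (lam : ℝ) (f : ℝ → ℝ) : Prop
    extends IsSchrodingerSolution q lam f where
  map_zero : f 0 = 0
  integrableOn_sq : IntegrableOn (fun R => f R ^ 2) (Ioi 0)

namespace IsBoundState

variable {q f : ℝ → ℝ} {lam : ℝ} {c : (ℝ → ℝ) × (ℝ → ℝ)}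

theorem isBigO_exp_neg_jetCombination (hf : IsBoundState q lam f) (hlam : lam < 0)
    (hq_lim : Tendsto q atTop (𝓝 0)) (hc₁ : c.1.HasTemperateGrowth)
    (hc₂ : c.2.HasTemperateGrowth) {b : ℝ} (hb : b < √(-lam) / 2) :
    jetCombination c f =O[atTop] fun R => exp (-b * R) :=
  (isBigO_exp_neg_mul_of_hasTemperateGrowth hc₁
      (hf.isBigO_exp_neg hlam hq_lim hf.integrableOn_sq) hb).add
    (isBigO_exp_neg_mul_of_hasTemperateGrowth hc₂
      (hf.isBigO_exp_neg_deriv hlam hq_lim hf.integrableOn_sq) hb)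

theorem tendsto_jetCombination (hf : IsBoundState q lam f) (hlam : lam < 0)
    (hq_lim : Tendsto q atTop (𝓝 0)) (hc₁ : c.1.HasTemperateGrowth)
    (hc₂ : c.2.HasTemperateGrowth) : Tendsto (jetCombination c f) atTop (𝓝 0) := by
  obtain ⟨b, hb_pos, hb⟩ := exists_between (half_pos (sqrt_pos.2 (neg_pos.2 hlam)))
  exact tendsto_zero_of_isBigO_exp_neg hb_pos
    (hf.isBigO_exp_neg_jetCombination hlam hq_lim hc₁ hc₂ hb)

theorem integrableOn_jetCombination_mul_exp (hf : IsBoundState q lam f) (hlam : lam < 0)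
    (hq_lim : Tendsto q atTop (𝓝 0)) (hc₁ : c.1.HasTemperateGrowth)
    (hc₂ : c.2.HasTemperateGrowth) {ε : ℝ} (hε : ε < √(-lam) / 2) :
    IntegrableOn (fun R => jetCombination c f R * exp (ε * R)) (Ioi 0) := by
  obtain ⟨b, hεb, hb⟩ := exists_between hε
  refine integrable_of_isBigO_exp_neg (sub_pos.2 hεb)
    ((hf.continuous_jetCombination hc₁.1.continuous hc₂.1.continuous).mul
      (by fun_prop)).continuousOn ?_
  refine ((hf.isBigO_exp_neg_jetCombination hlam hq_lim hc₁ hc₂ hb).mul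
    (isBigO_refl _ _)).congr_right fun R => ?_
  rw [← exp_add]
  ring_nf

theorem integrableOn_jetCombination (hf : IsBoundState q lam f) (hlam : lam < 0)
    (hq_lim : Tendsto q atTop (𝓝 0)) (hc₁ : c.1.HasTemperateGrowth)
    (hc₂ : c.2.HasTemperateGrowth) : IntegrableOn (jetCombination c f) (Ioi 0) := by
  simpa only [zero_mul, exp_zero, mul_one] using hf.integrableOn_jetCombination_mul_exp hlam
    hq_lim hc₁ hc₂ (half_pos (sqrt_pos.2 (neg_pos.2 hlam)))

theorem mul_integral_jetCombination_mul (hf : IsBoundState q lam f) (hlam : lam < 0)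
    (hq_even : q.Even) (hq : q.HasTemperateGrowth) (hq_lim : Tendsto q atTop (𝓝 0))
    (hc : IsEvenOddPair c) {η M : ℝ} {g : ℝ → ℝ} (hg : IsSchrodingerSolution q η g)
    (hg_zero : g 0 = 0) (hM : ∀ R, 0 ≤ R → |g R| ≤ M) (hM' : ∀ R, 0 ≤ R → |deriv g R| ≤ M) :
    η * ∫ R in Ioi 0, jetCombination c f R * g R =
      ∫ R in Ioi 0, jetCombination (schrodingerPair q lam c) f R * g R := by
  have hc' := hc.swap_derivPair hq_even hq lam
  have hcL := hc.schrodingerPair hq_even hq lam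
  have hdiff : ∀ {p : ℝ → ℝ}, p.HasTemperateGrowth → Differentiable ℝ p := fun hp =>
    hp.1.differentiable (by simp)
  have hu := hf.continuous_jetCombination hc.temperate_fst.1.continuous
    hc.temperate_snd.1.continuous
  have hu' := hf.continuous_jetCombination hc'.temperate_snd.1.continuous
    hc'.temperate_fst.1.continuous
  refine hg.mul_integral_mul_eq hg_zero hM hM' hu.continuousWithinAt hu'.continuousWithinAt
    (fun R hR => hf.hasDerivAt_jetCombination (hdiff hc.temperate_fst) (hdiff hc.temperate_snd) hR)
    (fun R hR => (hf.hasDerivAt_jetCombination (hdiff hc'.temperate_snd)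
      (hdiff hc'.temperate_fst) hR).congr_deriv ?_)
    (hc.jetCombination_zero hf.map_zero)
    (hf.integrableOn_jetCombination hlam hq_lim hc.temperate_fst hc.temperate_snd)
    (hf.integrableOn_jetCombination hlam hq_lim hcL.temperate_fst hcL.temperate_snd)
    (hf.tendsto_jetCombination hlam hq_lim hc.temperate_fst hc.temperate_snd)
    (hf.tendsto_jetCombination hlam hq_lim hc'.temperate_snd hc'.temperate_fst)
  rw [jetCombination_schrodingerPair]
  ring

theorem pow_mul_integral_jetCombination_mul (hf : IsBoundState q lam f) (hlam : lam < 0)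
    (hq_even : q.Even) (hq : q.HasTemperateGrowth) (hq_lim : Tendsto q atTop (𝓝 0))
    (hc : IsEvenOddPair c) {η M : ℝ} {g : ℝ → ℝ} (hg : IsSchrodingerSolution q η g)
    (hg_zero : g 0 = 0) (hM : ∀ R, 0 ≤ R → |g R| ≤ M) (hM' : ∀ R, 0 ≤ R → |deriv g R| ≤ M)
    (N : ℕ) : η ^ N * ∫ R in Ioi 0, jetCombination c f R * g R =
      ∫ R in Ioi 0, jetCombination ((schrodingerPair q lam)^[N] c) f R * g R := by
  induction N with
  | zero => simp
  | succ N ih =>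
    rw [pow_succ', mul_assoc, ih, Function.iterate_succ_apply']
    exact hf.mul_integral_jetCombination_mul hlam hq_even hq hq_lim
      (hc.iterate_schrodingerPair hq_even hq lam N) hg hg_zero hM hM'

theorem exists_forall_abs_integral_jetCombination_mul_le (hf : IsBoundState q lam f)
    (hlam : lam < 0) (hq_even : q.Even) (hq : q.HasTemperateGrowth)
    (hq_int : IntegrableOn q (Ioi 0)) (hq_lim : Tendsto q atTop (𝓝 0)) (hc : IsEvenOddPair c)
    (N : ℕ) : ∃ C, 0 < C ∧ ∀ η g, 1 ≤ η → IsRegularSolution q η g →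
      |∫ R in Ioi 0, jetCombination c f R * g R| ≤ C / η ^ N := by
  have hcN := hc.iterate_schrodingerPair hq_even hq lam N
  set u := jetCombination ((schrodingerPair q lam)^[N] c) f
  have hu : IntegrableOn u (Ioi 0) :=
    hf.integrableOn_jetCombination hlam hq_lim hcN.temperate_fst hcN.temperate_snd
  set M := √(exp (∫ s in Ioi 0, |q s|))
  refine ⟨M * (∫ R in Ioi 0, |u R|) + 1, ?_, fun η g hη hg => ?_⟩
  · have : 0 ≤ ∫ R in Ioi 0, |u R| := integral_nonneg fun R => abs_nonneg _
    positivity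
  have hpow : 0 < η ^ N := by positivity
  have hM : ∀ R, 0 ≤ R → |g R| ≤ M := fun R hR =>
    hg.abs_le_of_one_le hq.1.continuous hq_int hη hR
  have hM' : ∀ R, 0 ≤ R → |deriv g R| ≤ M := fun R hR =>
    hg.abs_deriv_le_of_one_le hq.1.continuous hq_int hη hR
  rw [le_div_iff₀' hpow]
  calc _ = |∫ R in Ioi 0, u R * g R| := by
        rw [← hf.pow_mul_integral_jetCombination_mul hlam hq_even hq hq_lim hc
          hg.toIsSchrodingerSolution hg.map_zero hM hM', abs_mul, abs_of_pos hpow]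
    _ ≤ M * ∫ R in Ioi 0, |u R| := abs_integral_mul_le hu hM
    _ ≤ _ := (lt_add_one _).le

end IsBoundState

/-! ### Volterra operators and analytic dependence -/

theorem analyticAt_of_isUnit {𝕜 E F : Type*} [NontriviallyNormedField 𝕜] [NormedAddCommGroup E]
    [NormedSpace 𝕜 E] [CompleteSpace E] [NormedAddCommGroup F] [NormedSpace 𝕜 F]
    {S : 𝕜 → E →L[𝕜] E} {L : E →L[𝕜] F} {x : E} {K : 𝕜 → F} {z : 𝕜} (hS : AnalyticAt 𝕜 S z)
    (hz : IsUnit (S z)) (h : ∀ᶠ η in 𝓝 z, ∃ v, S η v = x ∧ K η = L v) : AnalyticAt 𝕜 K z := by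
  obtain ⟨U, hU⟩ := hz
  have hinv : AnalyticAt 𝕜 Ring.inverse (S z) := hU ▸ analyticAt_inverse U
  have hunit : ∀ᶠ η in 𝓝 z, IsUnit (S η) :=
    hS.continuousAt.eventually (Units.isOpen.mem_nhds ⟨U, hU⟩)
  have hsol : AnalyticAt 𝕜 (fun η => L (Ring.inverse (S η) x)) z :=
    ((L ∘L ContinuousLinearMap.apply 𝕜 E x).analyticAt _).comp (hinv.comp hS)
  refine hsol.congr ?_
  filter_upwards [hunit, h] with η hη ⟨v, hv, hK⟩
  rw [hK, ← hv, ← mul_apply_eq_comp, Ring.inverse_mul_cancel _ hη,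
    one_apply_eq_self]

theorem analyticAt_of_add_sub_smul {𝕜 E F : Type*} [NontriviallyNormedField 𝕜]
    [NormedAddCommGroup E] [NormedSpace 𝕜 E] [CompleteSpace E] [NormedAddCommGroup F]
    [NormedSpace 𝕜 F] {A T : E →L[𝕜] E} {L : E →L[𝕜] F} {x : E} {K : 𝕜 → F} {z : 𝕜}
    (hA : ‖A‖ < 1) (h : ∀ᶠ η in 𝓝 z, ∃ v, v + A v + (η - z) • T v = x ∧ K η = L v) :
    AnalyticAt 𝕜 K z := by
  refine analyticAt_of_isUnit (S := fun η => 1 + A + (η - z) • T) (by fun_prop) ?_ h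
  simpa only [sub_self, zero_smul, add_zero, sub_neg_eq_add] using
    isUnit_one_sub_of_norm_lt_one ((norm_neg A).trans_lt hA)

theorem abs_intervalIntegral_mul_le {κ : ℝ → ℝ} (hκ : Continuous κ) {r C : ℝ} (hr : 0 ≤ r)
    (hC : ∫ s in (0 : ℝ)..r, |κ s| ≤ C) (f : ℝ≥0 →ᵇ ℝ) :
    |∫ s in (0 : ℝ)..r, κ s * f s.toNNReal| ≤ C * ‖f‖ := by
  refine le_trans ?_ (mul_le_mul_of_nonneg_right hC (norm_nonneg f))
  rw [← intervalIntegral.integral_mul_const, ← norm_eq_abs]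
  refine intervalIntegral.norm_integral_le_of_norm_le hr (ae_of_all _ fun s _ => ?_)
    ((hκ.abs.mul continuous_const).intervalIntegrable 0 r)
  rw [norm_mul, norm_eq_abs]
  exact mul_le_mul_of_nonneg_left (f.norm_coe_le_norm _) (abs_nonneg _)

/-- The Volterra operator `f ↦ ∫₀^r κ(r, s) f(s) ds` on bounded continuous functions on the
half-line, for a continuous kernel whose row integrals are bounded by `C`. -/
def volterraOperator (κ : ℝ → ℝ → ℝ) (hκ : Continuous (Function.uncurry κ)) (C : ℝ)
    (hC : ∀ r, 0 ≤ r → ∫ s in (0 : ℝ)..r, |κ r s| ≤ C) : (ℝ≥0 →ᵇ ℝ) →L[ℝ] (ℝ≥0 →ᵇ ℝ) :=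
  have hcont (f : ℝ≥0 →ᵇ ℝ) : Continuous (Function.uncurry fun (r : ℝ≥0) (s : ℝ) =>
      κ r s * f s.toNNReal) :=
    (hκ.comp (by fun_prop : Continuous fun x : ℝ≥0 × ℝ => ((x.1 : ℝ), x.2))).mul (by fun_prop)
  have hint (f : ℝ≥0 →ᵇ ℝ) (r : ℝ≥0) :
      IntervalIntegrable (fun s => κ r s * f s.toNNReal) volume 0 r :=
    ((hcont f).comp (Continuous.prodMk_right r)).intervalIntegrable 0 r
  have hbound (f : ℝ≥0 →ᵇ ℝ) (r : ℝ≥0) :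
      ‖∫ s in (0 : ℝ)..r, κ r s * f s.toNNReal‖ ≤ C * ‖f‖ :=
    abs_intervalIntegral_mul_le (hκ.comp (Continuous.prodMk_right _)) r.2 (hC r r.2) f
  LinearMap.mkContinuous
    { toFun := fun f => BoundedContinuousFunction.ofNormedAddCommGroup
        (fun r => ∫ s in (0 : ℝ)..r, κ r s * f s.toNNReal)
        (intervalIntegral.continuous_parametric_intervalIntegral_of_continuous (hcont f)
          NNReal.continuous_coe)
        _ (hbound f)
      map_add' := fun f g => by
        ext r
        exact (intervalIntegral.integral_congr fun s _ => mul_add _ _ _).trans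
          (intervalIntegral.integral_add (hint f r) (hint g r))
      map_smul' := fun m f => by
        ext r
        exact (intervalIntegral.integral_congr fun s _ => mul_left_comm _ _ _).trans
          (intervalIntegral.integral_const_mul m _) }
    C fun f => BoundedContinuousFunction.norm_ofNormedAddCommGroup_le _
      ((norm_nonneg _).trans (hbound f 0)) (hbound f)

theorem volterraOperator_apply {κ : ℝ → ℝ → ℝ} (hκ : Continuous (Function.uncurry κ)) {C : ℝ}
    (hC : ∀ r, 0 ≤ r → ∫ s in (0 : ℝ)..r, |κ r s| ≤ C) (f : ℝ≥0 →ᵇ ℝ) (r : ℝ≥0) :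
    volterraOperator κ hκ C hC f r = ∫ s in (0 : ℝ)..r, κ r s * f s.toNNReal := rfl

theorem norm_volterraOperator_le {κ : ℝ → ℝ → ℝ} (hκ : Continuous (Function.uncurry κ)) {C : ℝ}
    (hC : ∀ r, 0 ≤ r → ∫ s in (0 : ℝ)..r, |κ r s| ≤ C) : ‖volterraOperator κ hκ C hC‖ ≤ C := by
  refine ContinuousLinearMap.opNorm_le_bound _ (by simpa using hC 0 le_rfl) fun f =>
    (BoundedContinuousFunction.norm_le_of_nonempty).2 fun r => ?_
  exact abs_intervalIntegral_mul_le (hκ.comp (Continuous.prodMk_right _)) r.2 (hC r r.2) f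

/-- The functional `f ↦ ∫₀^∞ w f` on bounded continuous functions, for an integrable weight. -/
def integralFunctional (w : ℝ → ℝ) (hw : IntegrableOn w (Ioi 0)) : (ℝ≥0 →ᵇ ℝ) →L[ℝ] ℝ :=
  have hint (f : ℝ≥0 →ᵇ ℝ) : IntegrableOn (fun R => w R * f R.toNNReal) (Ioi 0) :=
    integrableOn_mul_of_abs_le hw (by fun_prop) fun R _ => f.norm_coe_le_norm R.toNNReal
  LinearMap.mkContinuous
    { toFun := fun f => ∫ R in Ioi 0, w R * f R.toNNReal
      map_add' := fun f g => by
        simpa only [BoundedContinuousFunction.add_apply, mul_add] using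
          integral_add (hint f) (hint g)
      map_smul' := fun m f => by
        simpa only [BoundedContinuousFunction.smul_apply, smul_eq_mul, mul_left_comm,
          RingHom.id_apply] using
          integral_const_mul m _ }
    (∫ R in Ioi 0, |w R|) fun f =>
      (abs_integral_mul_le hw fun R _ => f.norm_coe_le_norm R.toNNReal).trans_eq (mul_comm _ _)

theorem integralFunctional_apply {w : ℝ → ℝ} (hw : IntegrableOn w (Ioi 0)) (f : ℝ≥0 →ᵇ ℝ) :
    integralFunctional w hw f = ∫ R in Ioi 0, w R * f R.toNNReal := rfl

/-! ### Duhamel's formula in a weighted space -/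

/-- The Duhamel kernel `sin (k (r - s)) / k · p s` of `f'' + k² f = -p f`, conjugated by the weight
`exp B`. -/
def duhamelKernel (k : ℝ) (p B : ℝ → ℝ) (r s : ℝ) : ℝ :=
  sin (k * (r - s)) / k * p s * exp (B s - B r)

theorem continuous_duhamelKernel (k : ℝ) {p B : ℝ → ℝ} (hp : Continuous p) (hB : Continuous B) :
    Continuous (Function.uncurry (duhamelKernel k p B)) := by
  unfold duhamelKernel Function.uncurry
  fun_prop

theorem integral_abs_duhamelKernel_le {k c : ℝ} {p B B' : ℝ → ℝ} (hk : 0 < k) (hc : 0 ≤ c)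
    (hp : Continuous p) (hB' : Continuous B') (hB : ∀ s, HasDerivAt B (B' s) s)
    (hpB : ∀ s, |p s| ≤ c * B' s) {r : ℝ} (hr : 0 ≤ r) :
    ∫ s in (0 : ℝ)..r, |duhamelKernel k p B r s| ≤ c / k := by
  have hB_cont : Continuous B := continuous_iff_continuousAt.2 fun s => (hB s).continuousAt
  have hderiv : ∀ s, HasDerivAt (fun s => exp (B s - B r)) (exp (B s - B r) * B' s) s := fun s =>
    ((hB s).sub_const _).exp
  have hκ := (continuous_duhamelKernel k hp hB_cont).comp (Continuous.prodMk_right r)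
  have hle : ∀ s, |duhamelKernel k p B r s| ≤ c / k * (exp (B s - B r) * B' s) := fun s => by
    rw [duhamelKernel, abs_mul, abs_mul, abs_div, abs_of_pos hk, abs_of_pos (exp_pos _)]
    calc _ ≤ 1 / k * (c * B' s) * exp (B s - B r) := by
          gcongr
          · exact abs_sin_le_one _
          · exact hpB s
      _ = _ := by ring
  calc ∫ s in (0 : ℝ)..r, |duhamelKernel k p B r s|
      ≤ ∫ s in (0 : ℝ)..r, c / k * (exp (B s - B r) * B' s) :=
        intervalIntegral.integral_mono hr (hκ.abs.intervalIntegrable 0 r)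
          (Continuous.intervalIntegrable (by fun_prop) 0 r) hle
    _ = c / k * (1 - exp (B 0 - B r)) := by
        rw [intervalIntegral.integral_const_mul,
          intervalIntegral.integral_eq_sub_of_hasDerivAt (fun s _ => hderiv s)
            (Continuous.intervalIntegrable (by fun_prop) 0 r), sub_self, exp_zero]
    _ ≤ c / k := mul_le_of_le_one_right (by positivity) (sub_le_self _ (exp_pos _).le)

/-- The exponent of the weight in which the Duhamel operators at frequency `k` are bounded, the one
with potential `q` having norm at most `1 / 2`. -/
def weightExponent (q : ℝ → ℝ) (ε k R : ℝ) : ℝ :=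
  ε * R + 2 / k * ∫ s in (0 : ℝ)..R, |q s|

theorem hasDerivAt_weightExponent {q : ℝ → ℝ} (hq : Continuous q) (ε k R : ℝ) :
    HasDerivAt (weightExponent q ε k) (ε + 2 / k * |q R|) R :=
  (((hasDerivAt_id R).const_mul ε).add
    ((hq.abs.integral_hasStrictDerivAt 0 R).hasDerivAt.const_mul (2 / k))).congr_deriv (by simp)

theorem continuous_weightExponent {q : ℝ → ℝ} (hq : Continuous q) (ε k : ℝ) :
    Continuous (weightExponent q ε k) :=
  continuous_iff_continuousAt.2 fun R => (hasDerivAt_weightExponent hq ε k R).continuousAt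

theorem weightExponent_nonneg {q : ℝ → ℝ} {ε k R : ℝ} (hε : 0 ≤ ε) (hk : 0 ≤ k) (hR : 0 ≤ R) :
    0 ≤ weightExponent q ε k R := by
  have : 0 ≤ ∫ s in (0 : ℝ)..R, |q s| :=
    intervalIntegral.integral_nonneg hR fun s _ => abs_nonneg (q s)
  unfold weightExponent
  positivity

theorem integrableOn_mul_exp_weightExponent {q u : ℝ → ℝ} (hq : Continuous q)
    (hq_int : IntegrableOn q (Ioi 0)) {ε k : ℝ} (hk : 0 ≤ k)
    (hu : IntegrableOn (fun R => u R * exp (ε * R)) (Ioi 0)) :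
    IntegrableOn (fun R => u R * exp (weightExponent q ε k R)) (Ioi 0) := by
  have hbdd := integrableOn_mul_of_abs_le (f := fun R => exp (2 / k * ∫ s in (0 : ℝ)..R, |q s|))
    (M := exp (2 / k * ∫ s in Ioi 0, |q s|)) hu
    ((continuous_const.mul (intervalIntegral.continuous_primitive
      (fun a b => hq.abs.intervalIntegrable a b) 0)).rexp) fun R hR => by
      rw [abs_of_pos (exp_pos _)]
      gcongr
      exact intervalIntegral_abs_le_integral_Ioi hq_int hR
  simpa only [weightExponent, exp_add, mul_assoc] using hbdd

theorem IsRegularSolution.add_integral_duhamel {q f : ℝ → ℝ} {lam : ℝ}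
    (hf : IsRegularSolution q lam f) (hq : Continuous q) {k : ℝ} (hk : k ≠ 0) {r : ℝ}
    (hr : 0 ≤ r) :
    f r + ∫ s in (0 : ℝ)..r, sin (k * (r - s)) / k * ((q s + (lam - k ^ 2)) * f s) =
      sin (k * r) / k := by
  have hf_cont : Continuous f := hf.differentiable.continuous
  have hf'_cont : Continuous (deriv f) := hf.differentiable_deriv.continuous
  have hphase : ∀ s, HasDerivAt (fun s => k * (r - s)) (-k) s := fun s =>
    (((hasDerivAt_id s).const_sub r).const_mul k).congr_deriv (by ring)
  have hftc := intervalIntegral.integral_eq_sub_of_hasDerivAt_of_le hr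
    (f := fun s => -(sin (k * (r - s)) / k * deriv f s + cos (k * (r - s)) * f s))
    (f' := fun s => sin (k * (r - s)) / k * ((q s + (lam - k ^ 2)) * f s))
    (Continuous.continuousOn (by fun_prop))
    (fun s hs => ((((hphase s).sin.div_const k).mul (hf.hasDerivAt_deriv s)).add
      ((hphase s).cos.mul (hf.hasDerivAt s))).neg.congr_deriv (by
        rw [hf.deriv_deriv hs.1]
        field_simp
        ring))
    (Continuous.intervalIntegrable (by fun_prop) 0 r)
  simp only [hf.map_zero, hf.deriv_zero, sub_self, sub_zero, mul_zero, sin_zero, cos_zero,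
    zero_div, zero_mul, zero_add, one_mul, add_zero, mul_one] at hftc
  rw [hftc]
  ring

/-- `f` on the half-line, multiplied by the decaying weight `exp (-weightExponent q ε k)`. -/
def IsRegularSolution.weighted {q f : ℝ → ℝ} {lam ε k : ℝ} (hf : IsRegularSolution q lam f)
    (hq : Continuous q) (hq_int : IntegrableOn q (Ioi 0)) (hlam : 0 < lam) (hε : 0 ≤ ε)
    (hk : 0 ≤ k) : ℝ≥0 →ᵇ ℝ :=
  .ofNormedAddCommGroup (fun r => exp (-weightExponent q ε k r) * f r)
    (((continuous_weightExponent hq ε k).neg.rexp.mul hf.differentiable.continuous).comp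
      NNReal.continuous_coe)
    √(exp ((∫ s in Ioi 0, |q s|) / √lam) / lam) fun r => by
    rw [norm_mul, norm_of_nonneg (exp_pos _).le, norm_eq_abs]
    exact (mul_le_of_le_one_left (abs_nonneg _)
      (exp_le_one_iff.2 (neg_nonpos.2 (weightExponent_nonneg hε hk r.2)))).trans
      (hf.abs_le hq hq_int hlam r.2)

theorem IsRegularSolution.weighted_apply {q f : ℝ → ℝ} {lam ε k : ℝ}
    (hf : IsRegularSolution q lam f) (hq : Continuous q) (hq_int : IntegrableOn q (Ioi 0))
    (hlam : 0 < lam) (hε : 0 ≤ ε) (hk : 0 ≤ k) (r : ℝ≥0) :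
    hf.weighted hq hq_int hlam hε hk r = exp (-weightExponent q ε k r) * f r := rfl

theorem integral_abs_duhamelKernel_potential_le {q : ℝ → ℝ} (hq : Continuous q) {ε k r : ℝ}
    (hε : 0 ≤ ε) (hk : 0 < k) (hr : 0 ≤ r) :
    ∫ s in (0 : ℝ)..r, |duhamelKernel k q (weightExponent q ε k) r s| ≤ 1 / 2 := by
  refine (integral_abs_duhamelKernel_le hk (half_pos hk).le hq (by fun_prop)
    (hasDerivAt_weightExponent hq ε k) (fun s => ?_) hr).trans_eq (by field_simp)
  have hsplit : k / 2 * (ε + 2 / k * |q s|) = k / 2 * ε + |q s| := by field_simp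
  have : 0 ≤ k / 2 * ε := by positivity
  linarith

theorem integral_abs_duhamelKernel_one_le {q : ℝ → ℝ} (hq : Continuous q) {ε k r : ℝ}
    (hε : 0 < ε) (hk : 0 < k) (hr : 0 ≤ r) :
    ∫ s in (0 : ℝ)..r, |duhamelKernel k (fun _ => 1) (weightExponent q ε k) r s| ≤
      ε⁻¹ / k := by
  refine integral_abs_duhamelKernel_le hk (inv_pos.2 hε).le continuous_const (by fun_prop)
    (hasDerivAt_weightExponent hq ε k) (fun s => ?_) hr
  rw [abs_one, mul_add, inv_mul_cancel₀ hε.ne']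
  exact le_add_of_nonneg_right (by positivity)

theorem IsRegularSolution.integral_duhamelKernel_mul_weighted {q f : ℝ → ℝ} {lam ε k : ℝ}
    (hf : IsRegularSolution q lam f) (hq : Continuous q) (hq_int : IntegrableOn q (Ioi 0))
    (hlam : 0 < lam) (hε : 0 ≤ ε) (hk : 0 ≤ k) (p : ℝ → ℝ) (r : ℝ≥0) :
    ∫ s in (0 : ℝ)..r, duhamelKernel k p (weightExponent q ε k) r s *
        hf.weighted hq hq_int hlam hε hk s.toNNReal =
      exp (-weightExponent q ε k r) * ∫ s in (0 : ℝ)..r, sin (k * (r - s)) / k * (p s * f s) := by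
  rw [← intervalIntegral.integral_const_mul]
  refine intervalIntegral.integral_congr fun s hs => ?_
  rw [uIcc_of_le r.coe_nonneg] at hs
  have hexp : exp (weightExponent q ε k s) * exp (-weightExponent q ε k s) = 1 := by
    rw [← exp_add, add_neg_cancel, exp_zero]
  simp only [duhamelKernel, weighted_apply, Real.coe_toNNReal s hs.1, sub_eq_add_neg, exp_add]
  linear_combination (sin (k * (r + -s)) / k * p s * exp (-weightExponent q ε k r) * f s) * hexp

theorem IsRegularSolution.weighted_add_integral_duhamelKernel {q f : ℝ → ℝ} {lam ε k : ℝ}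
    (hf : IsRegularSolution q lam f) (hq : Continuous q) (hq_int : IntegrableOn q (Ioi 0))
    (hlam : 0 < lam) (hε : 0 ≤ ε) (hk : 0 < k) (r : ℝ≥0) :
    hf.weighted hq hq_int hlam hε hk.le r +
        (∫ s in (0 : ℝ)..r, duhamelKernel k q (weightExponent q ε k) r s *
          hf.weighted hq hq_int hlam hε hk.le s.toNNReal) +
        (lam - k ^ 2) * ∫ s in (0 : ℝ)..r, duhamelKernel k (fun _ => 1) (weightExponent q ε k) r s *
          hf.weighted hq hq_int hlam hε hk.le s.toNNReal =
      exp (-weightExponent q ε k r) * (sin (k * r) / k) := by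
  have hf_cont : Continuous f := hf.differentiable.continuous
  rw [hf.integral_duhamelKernel_mul_weighted, hf.integral_duhamelKernel_mul_weighted,
    ← hf.add_integral_duhamel hq hk.ne' r.coe_nonneg, weighted_apply, mul_left_comm, add_assoc,
    ← mul_add, ← mul_add, ← intervalIntegral.integral_const_mul,
    ← intervalIntegral.integral_add (Continuous.intervalIntegrable (by fun_prop) _ _)
      (Continuous.intervalIntegrable (by fun_prop) _ _)]
  congr 2
  refine intervalIntegral.integral_congr fun s _ => ?_
  ring

theorem analyticOnNhd_integral_mul_regularSolution {q u : ℝ → ℝ} (hq : Continuous q)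
    (hq_int : IntegrableOn q (Ioi 0)) {ε : ℝ} (hε : 0 < ε)
    (hu : IntegrableOn (fun R => u R * exp (ε * R)) (Ioi 0)) {φ : ℝ → ℝ → ℝ}
    (hφ : ∀ η, 0 < η → IsRegularSolution q η (φ η)) :
    AnalyticOnNhd ℝ (fun η => ∫ R in Ioi 0, u R * φ η R) (Ioi 0) := by
  intro η₀ hη₀
  rw [mem_Ioi] at hη₀
  have hk : 0 < √η₀ := sqrt_pos.2 hη₀
  have hw := integrableOn_mul_exp_weightExponent hq hq_int hk.le hu
  let v := fun η (hη : 0 < η) => (hφ η hη).weighted hq hq_int hη hε.le hk.le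
  let Dq := volterraOperator _
    (continuous_duhamelKernel (√η₀) hq (continuous_weightExponent hq ε √η₀)) _
    fun _ hr => integral_abs_duhamelKernel_potential_le hq hε.le hk hr
  let D₁ := volterraOperator _
    (continuous_duhamelKernel (√η₀) continuous_const (continuous_weightExponent hq ε √η₀)) _
    fun _ hr => integral_abs_duhamelKernel_one_le hq hε hk hr
  have hv : ∀ η hη r, (v η hη + Dq (v η hη) + (η - η₀) • D₁ (v η hη)) r =
      exp (-weightExponent q ε √η₀ r) * (sin (√η₀ * r) / √η₀) := fun η hη r => by
    rw [← (hφ η hη).weighted_add_integral_duhamelKernel hq hq_int hη hε.le hk r, sq_sqrt hη₀.le]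
    simp only [BoundedContinuousFunction.add_apply, BoundedContinuousFunction.smul_apply,
      smul_eq_mul, v, Dq, D₁, volterraOperator_apply]
  refine analyticAt_of_add_sub_smul (A := Dq) (T := D₁) (L := integralFunctional _ hw)
    (x := v η₀ hη₀ + Dq (v η₀ hη₀) + (η₀ - η₀) • D₁ (v η₀ hη₀))
    ((norm_volterraOperator_le _ _).trans_lt one_half_lt_one) ?_
  filter_upwards [eventually_gt_nhds hη₀] with η hη
  refine ⟨v η hη, BoundedContinuousFunction.ext fun r => (hv η hη r).trans (hv η₀ hη₀ r).symm, ?_⟩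
  rw [integralFunctional_apply]
  refine setIntegral_congr_fun measurableSet_Ioi fun R hR => ?_
  simp only [v, IsRegularSolution.weighted_apply, Real.coe_toNNReal R (le_of_lt hR)]
  rw [exp_neg, mul_assoc, mul_inv_cancel_left₀ (exp_pos _).ne']

theorem IsBoundState.analyticOnNhd_integral_jetCombination_mul {q f : ℝ → ℝ} {lam : ℝ}
    {c : (ℝ → ℝ) × (ℝ → ℝ)} (hf : IsBoundState q lam f) (hlam : lam < 0) (hq : Continuous q)
    (hq_int : IntegrableOn q (Ioi 0)) (hq_lim : Tendsto q atTop (𝓝 0))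
    (hc₁ : c.1.HasTemperateGrowth) (hc₂ : c.2.HasTemperateGrowth) {φ : ℝ → ℝ → ℝ}
    (hφ : ∀ η, 0 < η → IsRegularSolution q η (φ η)) :
    AnalyticOnNhd ℝ (fun η => ∫ R in Ioi 0, jetCombination c f R * φ η R) (Ioi 0) := by
  obtain ⟨ε, hε_pos, hε⟩ := exists_between (half_pos (sqrt_pos.2 (neg_pos.2 hlam)))
  exact analyticOnNhd_integral_mul_regularSolution hq hq_int hε_pos
    (hf.integrableOn_jetCombination_mul_exp hlam hq_lim hc₁ hc₂ hε) hφ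

theorem Kd_smooth_rapidly_decaying_general {q : ℝ → ℝ} (hq_even : q.Even)
    (hq : q.HasTemperateGrowth) (hq_int : IntegrableOn q (Ioi 0)) (hq_lim : Tendsto q atTop (𝓝 0))
    {ξd : ℝ} (hξd : ξd < 0) {φd : ℝ → ℝ} (hφd : IsBoundState q ξd φd) {φ : ℝ → ℝ → ℝ}
    (hφ : ∀ η, 0 < η → IsRegularSolution q η (φ η)) :
    (∀ η, 0 < η → IntegrableOn (fun R => R * deriv φd R * φ η R) (Ioi 0)) ∧
      AnalyticOnNhd ℝ (fun η => ∫ R in Ioi 0, R * deriv φd R * φ η R) (Ioi 0) ∧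
      ∀ N : ℕ, ∃ C : ℝ, 0 < C ∧ ∀ η : ℝ, 1 ≤ η →
        |∫ R in Ioi 0, R * deriv φd R * φ η R| ≤ C / η ^ N := by
  simp only [← jetCombination_zero_id]
  have hc := IsEvenOddPair.zero_id
  have hq_cont : Continuous q := hq.1.continuous
  refine ⟨fun η hη => ?_, hφd.analyticOnNhd_integral_jetCombination_mul hξd hq_cont hq_int hq_lim
    hc.temperate_fst hc.temperate_snd hφ, fun N => ?_⟩
  · exact integrableOn_mul_of_abs_le
      (hφd.integrableOn_jetCombination hξd hq_lim hc.temperate_fst hc.temperate_snd)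
      (hφ η hη).differentiable.continuous fun R hR => (hφ η hη).abs_le hq_cont hq_int hη hR
  · obtain ⟨C, hC, hle⟩ := hφd.exists_forall_abs_integral_jetCombination_mul_le hξd hq_even hq
      hq_int hq_lim hc N
    exact ⟨C, hC, fun η hη => hle η _ hη (hφ η (one_pos.trans_le hη))⟩

/-- The potential of `𝓛 = -∂² - softPotential`. -/
def softPotential (R : ℝ) : ℝ :=
  5 / (1 + R ^ 2 / 3) ^ 2

theorem even_softPotential : softPotential.Even := fun R => by
  rw [softPotential, neg_sq, softPotential]

theorem hasTemperateGrowth_softPotential : softPotential.HasTemperateGrowth := by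
  have hrescale : softPotential =
      (fun _ => 5) * (fun x : ℝ => (1 + ‖x‖ ^ 2) ^ (-2 : ℝ)) ∘ ((fun _ => (√3)⁻¹) * id) := by
    funext R
    have hsq : ‖(√3)⁻¹ * R‖ ^ 2 = R ^ 2 / 3 := by
      rw [norm_eq_abs, sq_abs, mul_pow, inv_pow, sq_sqrt zero_le_three]
      ring
    simp only [softPotential, Pi.mul_apply, Function.comp_apply, id_eq, hsq]
    rw [rpow_neg (by positivity), rpow_two, div_eq_mul_inv]
  rw [hrescale]
  exact (Function.HasTemperateGrowth.const 5).mul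
    ((Function.hasTemperateGrowth_one_add_norm_sq_rpow ℝ (-2)).comp
      ((Function.HasTemperateGrowth.const (√3)⁻¹).mul .id))

theorem integrable_softPotential : Integrable softPotential := by
  refine (integrable_inv_one_add_sq.const_mul 15).mono'
    hasTemperateGrowth_softPotential.1.continuous.aestronglyMeasurable (ae_of_all _ fun R => ?_)
  rw [softPotential, norm_of_nonneg (by positivity), ← div_eq_mul_inv,
    div_le_div_iff₀ (by positivity) (by positivity)]
  nlinarith [sq_nonneg R, sq_nonneg (R ^ 2)]

theorem tendsto_softPotential : Tendsto softPotential atTop (𝓝 0) :=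
  tendsto_const_nhds.div_atTop <| (tendsto_pow_atTop two_ne_zero).comp <|
    tendsto_atTop_add_const_left _ _ <| (tendsto_pow_atTop two_ne_zero).atTop_div_const three_pos

end

/-- The function `K_d(η) = ⟨R∂_Rφ_d, φ(·,η)⟩ = ∫₀^∞ R φ_d'(R) φ(R,η) dR` is well defined,
smooth on `(0,∞)`, and rapidly decaying at infinity. -/
theorem Kd_smooth_rapidly_decaying
    (ξd : ℝ) (φd : ℝ → ℝ) (φ : ℝ → ℝ → ℝ)
    -- ξd is a negative eigenvalue with L²-normalized positive Dirichlet eigenfunction φd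
    (hξd : ξd < 0)
    (hφd0 : φd 0 = 0)
    (hφd_pos : ∀ R : ℝ, 0 < R → 0 < φd R)
    (hφd_d : ∀ R : ℝ, HasDerivAt φd (deriv φd R) R)
    (hφd_dd : ∀ R : ℝ, HasDerivAt (deriv φd) (deriv (deriv φd) R) R)
    (hφd_eq : ∀ R ∈ Set.Ioi (0 : ℝ),
      - deriv (deriv φd) R - (5 / (1 + R ^ 2 / 3) ^ 2) * φd R = ξd * φd R)
    (hφd_L2 : IntegrableOn (fun R => (φd R) ^ 2) (Set.Ioi 0))
    (hφd_norm : ∫ R in Set.Ioi (0 : ℝ), (φd R) ^ 2 = 1)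
    -- φ(·,η) is the regular solution with φ(0,η) = 0, ∂_Rφ(0,η) = 1
    (hφ : ∀ η : ℝ,
      φ η 0 = 0 ∧ deriv (φ η) 0 = 1 ∧
      (∀ R : ℝ, HasDerivAt (φ η) (deriv (φ η) R) R) ∧
      (∀ R : ℝ, HasDerivAt (deriv (φ η)) (deriv (deriv (φ η)) R) R) ∧
      (∀ R : ℝ, - deriv (deriv (φ η)) R - (5 / (1 + R ^ 2 / 3) ^ 2) * φ η R = η * φ η R)) :
    -- the integral defining K_d converges
    (∀ η : ℝ, 0 < η →
      IntegrableOn (fun R => R * deriv φd R * φ η R) (Set.Ioi 0)) ∧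
    -- K_d is smooth on (0,∞)
    ContDiffOn ℝ (⊤ : ℕ∞) (fun η => ∫ R in Set.Ioi (0 : ℝ), R * deriv φd R * φ η R)
      (Set.Ioi 0) ∧
    -- K_d decays rapidly at infinity
    (∀ N : ℕ, ∃ C : ℝ, 0 < C ∧ ∀ η : ℝ, 1 ≤ η →
      |∫ R in Set.Ioi (0 : ℝ), R * deriv φd R * φ η R| ≤ C / η ^ N) := by
  have hφ' : ∀ η, 0 < η → IsRegularSolution softPotential η (φ η) := fun η _ =>
    have ⟨hφ0, hφ1, hφ_d, hφ_dd, hφ_eq⟩ := hφ η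
    { differentiable := fun R => (hφ_d R).differentiableAt
      differentiable_deriv := fun R => (hφ_dd R).differentiableAt
      eq_on_Ioi := fun R _ => hφ_eq R
      map_zero := hφ0
      deriv_zero := hφ1 }
  have hφd : IsBoundState softPotential ξd φd :=
    { differentiable := fun R => (hφd_d R).differentiableAt
      differentiable_deriv := fun R => (hφd_dd R).differentiableAt
      eq_on_Ioi := hφd_eq
      map_zero := hφd0
      integrableOn_sq := hφd_L2 }
  obtain ⟨hint, hanalytic, hdecay⟩ := Kd_smooth_rapidly_decaying_general even_softPotential
    hasTemperateGrowth_softPotential integrable_softPotential.integrableOn tendsto_softPotential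
    hξd hφd hφ'
  exact ⟨hint, hanalytic.analyticOn.contDiffOn (uniqueDiffOn_Ioi 0), hdecay⟩

end DiscreteKernel
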